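/- arXiv:1202.0364 — 3 statements merged into one kernel-verified Lean document; each statement's English description precedes it below -/
import Mathlib

section
/- A finite simple graph G is a cograph (i.e., G has no induced subgraph isomorphic to the path P4 on four vertices) if and only if every induced subgraph H of G with at least two vertices satisfies: H is disconnected or the complement of H is disconnected. -/
/-- A graph is a cograph if it has no induced subgraph isomorphic to `P₄`,
the path on four vertices. Graph embeddings capture induced subgraphs. -/
def IsCograph {V : Type*} (G : SimpleGraph V) : Prop :=
  IsEmpty (SimpleGraph.pathGraph 4 ↪g G)

/-!
Deleting a vertex `v` that is not universal from a connected cograph leaves it connected. Indeed,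
`v` has a neighbour in every component of `G - v`. In the component of a non-neighbour of `v` some
edge `u u'` joins a neighbour `u` of `v` to a non-neighbour `u'`, and a neighbour `z` of `v` in
another component would give the induced path `z v u u'`.

Since `P₄` is self-complementary, the same applies to `Gᶜ`. If both `G` and `Gᶜ` are connected on at
least two vertices, then no vertex is universal in either of them, so vertices can be deleted one by
one until two remain; but a graph on two vertices and its complement are not both connected.
-/

open SimpleGraph

section

variable {V W : Type*} {G : SimpleGraph V} {H : SimpleGraph W}

theorem compl_induce (G : SimpleGraph V) (s : Set V) : (G.induce s)ᶜ = Gᶜ.induce s := by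
  ext x y
  simp [Subtype.ext_iff]

theorem exists_boundary_adj_of_reachable {S : Set V} {a b : V} (hab : G.Reachable a b)
    (ha : a ∈ S) (hb : b ∉ S) : ∃ x ∈ S, ∃ y ∉ S, G.Adj x y ∧ G.Reachable y b := by
  obtain ⟨p⟩ := hab
  obtain ⟨⟨⟨x, y⟩, hxy⟩, -, ⟨hxS, hxb⟩, hy⟩ :=
    p.exists_boundary_dart {x | x ∈ S ∧ G.Reachable x b} ⟨ha, p.reachable⟩ fun h => hb h.1
  have hyb : G.Reachable y b := hxy.symm.reachable.trans hxb
  exact ⟨x, hxS, y, fun hyS => hy ⟨hyS, hyb⟩, hxy, hyb⟩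

theorem exists_adj_notMem_of_reachable {s : Set V} {a : s} {b : V} (hab : G.Reachable a b)
    (hb : b ∉ s) : ∃ x : s, (G.induce s).Reachable x a ∧ ∃ y ∉ s, G.Adj x y := by
  obtain ⟨_, ⟨x, hxa, rfl⟩, y, hy, hxy, -⟩ := exists_boundary_adj_of_reachable
    (S := Subtype.val '' {x : s | (G.induce s).Reachable x a}) hab ⟨a, .rfl, rfl⟩
    (by rintro ⟨x, -, rfl⟩; exact hb x.2)
  refine ⟨x, hxa, y, fun hys => hy ⟨⟨y, hys⟩, ?_, rfl⟩, hxy⟩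
  have hyx : (G.induce s).Adj ⟨y, hys⟩ x := hxy.symm
  exact hyx.reachable.trans hxa

/-- The self-complementarity of `P₄`: the complement of the path `0 1 2 3` is the path
`1 3 0 2`. -/
def pathGraphFourIsoCompl : pathGraph 4 ≃g (pathGraph 4)ᶜ where
  toFun := ![1, 3, 0, 2]
  invFun := ![2, 0, 3, 1]
  left_inv := by decide
  right_inv := by decide
  map_rel_iff' := by
    simp only [compl_adj, pathGraph_adj]
    decide

theorem connected_induce_range (f : H ↪g G) (hH : H.Connected) :
    (G.induce (Set.range f)).Connected :=
  f.isoInduceRange.connected_iff.1 hH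

theorem connected_compl_induce_range (f : H ↪g G) (hH : Hᶜ.Connected) :
    (G.induce (Set.range f))ᶜ.Connected := by
  rw [compl_induce]
  exact connected_induce_range (Embedding.complEquiv f) hH

namespace IsCograph

theorem of_embedding (hG : IsCograph G) (f : H ↪g G) : IsCograph H :=
  ⟨fun g => hG.false (f.comp g)⟩

theorem compl (hG : IsCograph G) : IsCograph Gᶜ :=
  ⟨fun f => hG.false <| Embedding.complEquiv.symm <| f.comp pathGraphFourIsoCompl.symm.toEmbedding⟩

theorem adj_of_path (hG : IsCograph G) {a b c d : V} (hab : G.Adj a b) (hbc : G.Adj b c)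
    (hcd : G.Adj c d) (hac : ¬ G.Adj a c) (hbd : ¬ G.Adj b d) : G.Adj a d := by
  by_contra had
  have hadj (i j : Fin 4) :
      G.Adj (![a, b, c, d] i) (![a, b, c, d] j) ↔ (pathGraph 4).Adj i j := by
    fin_cases i <;> fin_cases j <;> simp_all [pathGraph_adj, G.adj_comm]
  have twin_free : ∀ i j : Fin 4,
      (∀ k, (pathGraph 4).Adj i k ↔ (pathGraph 4).Adj j k) → i = j := by
    simp only [pathGraph_adj]
    decide
  have hinj : Function.Injective ![a, b, c, d] := fun i j hij =>
    twin_free i j fun k => by rw [← hadj, ← hadj, hij]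
  exact hG.false ⟨⟨![a, b, c, d], hinj⟩, hadj _ _⟩

theorem preconnected_induce_compl_singleton (hG : IsCograph G) (hconn : G.Preconnected) {v : V}
    (hv : ¬ G.IsUniversal v) : (G.induce {v}ᶜ).Preconnected := by
  have exists_neighbor (x : ({v}ᶜ : Set V)) :
      ∃ z : ({v}ᶜ : Set V), (G.induce {v}ᶜ).Reachable z x ∧ G.Adj z v := by
    simpa using exists_adj_notMem_of_reachable (hconn x v) (by simp)
  obtain ⟨w, hvw, hw⟩ : ∃ w, v ≠ w ∧ ¬ G.Adj v w := by simpa [IsUniversal] using hv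
  let w' : ({v}ᶜ : Set V) := ⟨w, hvw.symm⟩
  obtain ⟨u₀, hu₀w, hu₀v⟩ := exists_neighbor w'
  obtain ⟨u, huv, u', hu'v, huu', hu'w⟩ := exists_boundary_adj_of_reachable
    (S := {x : ({v}ᶜ : Set V) | G.Adj x v}) hu₀w hu₀v fun h => hw h.symm
  suffices h : ∀ x, (G.induce {v}ᶜ).Reachable x w' from fun x y => (h x).trans (h y).symm
  intro x
  obtain ⟨z, hzx, hzv⟩ := exists_neighbor x
  by_contra hxw
  have hzu' : ¬ (G.induce {v}ᶜ).Reachable z u' := fun h => hxw (hzx.symm.trans (h.trans hu'w))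
  have hzu : ¬ G.Adj z u := fun h => hzu' (.trans (Adj.reachable h) huu'.reachable)
  have hadj : G.Adj z u' := hG.adj_of_path hzv (Adj.symm huv) huu' hzu fun h => hu'v h.symm
  exact hzu' (Adj.reachable hadj)

theorem subsingleton_of_preconnected_of_preconnected_compl [Finite V] (hG : IsCograph G)
    (hconn : G.Preconnected) (hconn' : Gᶜ.Preconnected) : Subsingleton V := by
  induction hn : Nat.card V using Nat.strong_induction_on generalizing V with
  | _ n ih =>
    by_contra! hV
    obtain ⟨v⟩ := hV.to_nonempty
    obtain ⟨u, hvu⟩ := hconn.exists_adj_of_nontrivial v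
    obtain ⟨u', hvu'⟩ := hconn'.exists_adj_of_nontrivial v
    have hdel : (G.induce {v}ᶜ).Preconnected :=
      hG.preconnected_induce_compl_singleton hconn fun hv => hvu'.2 (hv hvu'.ne)
    have hdel' : (G.induce {v}ᶜ)ᶜ.Preconnected := by
      rw [compl_induce]
      exact hG.compl.preconnected_induce_compl_singleton hconn' fun hv => (hv hvu.ne).2 hvu
    have hcard : Nat.card ({v}ᶜ : Set V) < n := hn ▸ Finite.card_subtype_lt (x := v) (by simp)
    have hsub := ih _ hcard (hG.of_embedding (Embedding.induce _)) hdel hdel' rfl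
    have huu' : u = u' :=
      congrArg Subtype.val (hsub.elim ⟨u, hvu.ne'⟩ ⟨u', hvu'.ne'⟩)
    exact hvu'.2 (huu' ▸ hvu)

end IsCograph

end

theorem cograph_iff_disconnected_or_compl_disconnected_general
    {V : Type*} (G : SimpleGraph V) :
    IsCograph G ↔
      ∀ s : Set V, s.Finite → s.Nontrivial →
        ¬ (G.induce s).Connected ∨ ¬ ((G.induce s)ᶜ).Connected := by
  constructor
  · intro hG s hfin hs
    have : Finite s := hfin
    by_contra! ⟨hconn, hconn'⟩
    have hGs : IsCograph (G.induce s) := hG.of_embedding (Embedding.induce s)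
    have hsub : Subsingleton s := hGs.subsingleton_of_preconnected_of_preconnected_compl
      hconn.preconnected hconn'.preconnected
    exact hs.not_subsingleton (s.subsingleton_coe.1 hsub)
  · refine fun h => ⟨fun f => ?_⟩
    have hrange : (Set.range f).Nontrivial := by
      simpa using Set.nontrivial_univ.image f.injective
    have hpath : (pathGraph 4).Connected := pathGraph_connected 3
    have hpath' : (pathGraph 4)ᶜ.Connected := pathGraphFourIsoCompl.connected_iff.1 hpath
    exact (h _ (Set.finite_range f) hrange).elim
      (· (connected_induce_range f hpath)) (· (connected_compl_induce_range f hpath'))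

/-- A finite simple graph `G` is a cograph if and only if every induced subgraph of `G`
with at least two vertices is disconnected or has a disconnected complement. -/
theorem cograph_iff_disconnected_or_compl_disconnected
    {V : Type*} [Fintype V] (G : SimpleGraph V) :
    IsCograph G ↔
      ∀ s : Set V, s.Nontrivial →
        ¬ (G.induce s).Connected ∨ ¬ ((G.induce s)ᶜ).Connected := by
  simpa only [Set.toFinite, true_imp_iff] using
    cograph_iff_disconnected_or_compl_disconnected_general G
end

section
/- For every natural number k there exists a finite collection F of finite simple graphs such that a finite simple graph G is a k-probe cograph if and only if G contains no member of F as an induced subgraph. -/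
/-- `G` is a `k`-probe cograph if there are `k` independent sets `N 0, …, N (k-1)` of `G`
and a cograph `H` on the same vertex set such that every edge of `G` is an edge of `H`
and every edge of `H` not in `G` has both endpoints in a common `N i`. -/
def IsKProbeCograph {V : Type*} (k : ℕ) (G : SimpleGraph V) : Prop :=
  ∃ (N : Fin k → Set V) (H : SimpleGraph V),
    (∀ i : Fin k, ∀ x ∈ N i, ∀ y ∈ N i, ¬ G.Adj x y) ∧
    IsCograph H ∧
    (∀ x y, G.Adj x y → H.Adj x y) ∧
    (∀ x y, H.Adj x y → ¬ G.Adj x y → ∃ i : Fin k, x ∈ N i ∧ y ∈ N i)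

/-!
Every finite cograph is described by a cotree, because a cograph on at least two vertices or its
complement is disconnected. Kruskal's theorem for cotrees therefore makes finite cographs, even with
well-quasi-ordered vertex labels, well-quasi-ordered by the induced subgraph relation. The same
follows for `k`-probe cographs: label each vertex `x` of the cograph `H` by the set of those `i`
with `x ∈ N i`. Two vertices are adjacent in `G` iff they are adjacent in `H` and their sets are
disjoint, so an embedding that respects `H` and these labels respects `G`.

A minimal forbidden induced subgraph becomes a `k`-probe cograph when a vertex is deleted. Labelling
the remaining vertices by their adjacency to the deleted one, infinitely many sizes would give two
minimal forbidden induced subgraphs of which the smaller one embeds into the larger. Hence their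
sizes are bounded. Infinite graphs reduce to their finite induced subgraphs by compactness: an
ultraproduct of cographs `H` and sets `N i` for the finite induced subgraphs works for the whole
graph.
-/

open SimpleGraph

/-! ### Kruskal's theorem for cotrees -/

theorem partiallyWellOrderedOn_of_isMinBadSeq {α : Type*} {r : α → α → Prop} [IsTrans α r]
    {rk : α → ℕ} {s : Set α} {f : ℕ → α} (hf : Set.PartiallyWellOrderedOn.IsBadSeq r s f)
    (hmin : ∀ n, Set.PartiallyWellOrderedOn.IsMinBadSeq r rk s n f) :
    {a ∈ s | ∃ n, r a (f n) ∧ rk a < rk (f n)}.PartiallyWellOrderedOn r := by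
  rw [Set.partiallyWellOrderedOn_iff_exists_lt]
  intro g hg
  by_contra! hbad
  choose hgs φ hr hrk using hg
  set i₀ := Function.argmin φ
  have hi₀ (i : ℕ) : φ i₀ ≤ φ i := Function.argmin_le φ i
  -- Replacing the tail of `f` from `φ i₀` on by that of `g` from `i₀` on keeps the sequence bad.
  refine hmin (φ i₀) (fun n => if n < φ i₀ then f n else g (i₀ + (n - φ i₀)))
    (fun m hm => (if_pos hm).symm) (by simpa using hrk i₀) ⟨fun n => ?_, fun m n hmn => ?_⟩
  · dsimp only
    split_ifs
    exacts [hf.1 n, hgs _]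
  · by_cases hn : n < φ i₀
    · simpa [hn, hmn.trans hn] using hf.2 m n hmn
    · by_cases hm : m < φ i₀
      · simp only [hm, hn, if_true, if_false]
        exact fun h => hf.2 m _ (hm.trans_le (hi₀ _)) (_root_.trans h (hr _))
      · simp only [hm, hn, if_false]
        exact hbad _ _ (by omega)

/-- Binary cotrees with leaves labelled by `L`. An inner node with flag `true` stands for the join
of the graphs described by its two children, one with flag `false` for their disjoint union. -/
inductive Cotree (L : Type*) where
  | leaf (a : L) : Cotree L
  | node (b : Bool) (t u : Cotree L) : Cotree L

namespace Cotree

variable {L : Type*} {r : L → L → Prop}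

/-- Homeomorphic embedding of cotrees: the relation of Kruskal's theorem, where inner nodes keep
their flag and their left and right children, and labels of leaves may increase along `r`. -/
inductive Emb (r : L → L → Prop) : Cotree L → Cotree L → Prop
  | leaf {a a' : L} : r a a' → Emb r (leaf a) (leaf a')
  | left {s t : Cotree L} (b : Bool) (u : Cotree L) : Emb r s t → Emb r s (node b t u)
  | right {s u : Cotree L} (b : Bool) (t : Cotree L) : Emb r s u → Emb r s (node b t u)
  | node {t t' u u' : Cotree L} (b : Bool) :
      Emb r t t' → Emb r u u' → Emb r (node b t u) (node b t' u')

theorem Emb.refl [Std.Refl r] (t : Cotree L) : Emb r t t := by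
  induction t with
  | leaf a => exact .leaf (refl_of r a)
  | node b t u ht hu => exact .node b ht hu

theorem Emb.trans [IsTrans L r] {s t u : Cotree L} (hst : Emb r s t) (htu : Emb r t u) :
    Emb r s u := by
  induction htu generalizing s with
  | leaf h =>
    cases hst with
    | leaf h' => exact .leaf (trans_of r h' h)
  | left b u _ ih => exact .left b u (ih hst)
  | right b t _ ih => exact .right b t (ih hst)
  | node b _ _ iht ihu =>
    cases hst with
    | left _ _ h => exact .left b _ (iht h)
    | right _ _ h => exact .right b _ (ihu h)
    | node _ h₁ h₂ => exact .node b (iht h₁) (ihu h₂)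

instance [IsPreorder L r] : IsPreorder (Cotree L) (Emb r) where
  refl := Emb.refl
  trans _ _ _ := Emb.trans

theorem wellQuasiOrdered_emb [IsPreorder L r] (hr : WellQuasiOrdered r) :
    WellQuasiOrdered (Emb r) := by
  rw [← Set.partiallyWellOrderedOn_univ_iff,
    Set.PartiallyWellOrderedOn.iff_not_exists_isMinBadSeq sizeOf]
  rintro ⟨f, hf, hmin⟩
  have hS := partiallyWellOrderedOn_of_isMinBadSeq hf hmin
  set S := {t : Cotree L | t ∈ Set.univ ∧ ∃ n, Emb r t (f n) ∧ sizeOf t < sizeOf (f n)}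
  have hleaf : (leaf '' (Set.univ : Set L)).PartiallyWellOrderedOn (Emb r) :=
    (Set.partiallyWellOrderedOn_univ_iff.2 hr).image_of_monotone_on fun _ _ _ _ h => .leaf h
  have hnode (b : Bool) :
      ((fun p : Cotree L × Cotree L => node b p.1 p.2) '' S ×ˢ S).PartiallyWellOrderedOn (Emb r) :=
    (hS.prod hS).image_of_monotone_on fun _ _ _ _ h => .node b h.1 h.2
  obtain ⟨m, n, hmn, h⟩ := (hleaf.union ((hnode false).union (hnode true))).exists_lt
    (f := f) fun n => by
      cases hfn : f n with
      | leaf a => exact .inl ⟨a, Set.mem_univ a, rfl⟩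
      | node b t u =>
        have ht : t ∈ S :=
          ⟨trivial, n, hfn ▸ .left b u (.refl t), by simp only [hfn, node.sizeOf_spec]; omega⟩
        have hu : u ∈ S :=
          ⟨trivial, n, hfn ▸ .right b t (.refl u), by simp only [hfn, node.sizeOf_spec]; omega⟩
        cases b
        · exact .inr (.inl ⟨(t, u), ⟨ht, hu⟩, rfl⟩)
        · exact .inr (.inr ⟨(t, u), ⟨ht, hu⟩, rfl⟩)
  exact hf.2 m n hmn h

end Cotree

/-! ### The graph of a cotree -/

section SumOrJoin

variable {V W X : Type*} {b : Bool} {G : SimpleGraph V} {H : SimpleGraph W} {K : SimpleGraph X}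

/-- The operation of an inner node of a cotree on graphs: the join of `G` and `H` if `b = true`,
their disjoint union if `b = false`. -/
def sumOrJoin (b : Bool) (G : SimpleGraph V) (H : SimpleGraph W) : SimpleGraph (V ⊕ W) :=
  (G ⊕g H) ⊔ if b then completeBipartiteGraph V W else ⊥

/-- The left summand as an induced subgraph of `sumOrJoin`. -/
def sumOrJoin.inl : G ↪g sumOrJoin b G H where
  toEmbedding := .inl
  map_rel_iff' := by cases b <;> simp [sumOrJoin]

/-- The right summand as an induced subgraph of `sumOrJoin`. -/
def sumOrJoin.inr : H ↪g sumOrJoin b G H where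
  toEmbedding := .inr
  map_rel_iff' := by cases b <;> simp [sumOrJoin]

theorem sumOrJoin_adj_inl_inr (x : V) (y : W) :
    (sumOrJoin b G H).Adj (.inl x) (.inr y) ↔ b = true := by
  cases b <;> simp [sumOrJoin]

/-- The embedding of `sumOrJoin b G H` glued from embeddings of `G` and `H` with disjoint ranges. -/
def sumOrJoin.elim (e₁ : G ↪g K) (e₂ : H ↪g K) (hne : ∀ x y, e₁ x ≠ e₂ y)
    (hadj : ∀ x y, K.Adj (e₁ x) (e₂ y) ↔ b = true) : sumOrJoin b G H ↪g K where
  toFun := Sum.elim e₁ e₂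
  inj' := e₁.injective.sumElim e₂.injective hne
  map_rel_iff' {x y} := by
    rcases x with x | x <;> rcases y with y | y
    · exact e₁.map_adj_iff.trans sumOrJoin.inl.map_adj_iff.symm
    · exact (hadj x y).trans (sumOrJoin_adj_inl_inr x y).symm
    · exact (K.adj_comm _ _).trans ((hadj y x).trans
        ((sumOrJoin_adj_inl_inr y x).symm.trans ((sumOrJoin b G H).adj_comm _ _)))
    · exact e₂.map_adj_iff.trans sumOrJoin.inr.map_adj_iff.symm

end SumOrJoin

namespace Cotree

variable {L : Type*}

/-- The leaves of a cotree, which are the vertices of its graph. -/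
def Leaf : Cotree L → Type
  | leaf _ => Unit
  | node _ t u => t.Leaf ⊕ u.Leaf

/-- The cograph described by a cotree. -/
def graph : (t : Cotree L) → SimpleGraph t.Leaf
  | leaf _ => (⊥ : SimpleGraph Unit)
  | node b t u => sumOrJoin b t.graph u.graph

/-- The labels of the leaves of a cotree. -/
def label : (t : Cotree L) → t.Leaf → L
  | leaf a => fun _ => a
  | node _ t u => Sum.elim t.label u.label

theorem Emb.exists_embedding {r : L → L → Prop} {t u : Cotree L} (h : Emb r t u) :
    ∃ f : t.graph ↪g u.graph, ∀ x, r (t.label x) (u.label (f x)) := by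
  induction h with
  | leaf h => exact ⟨.refl, fun _ => h⟩
  | left b u _ ih =>
    obtain ⟨f, hf⟩ := ih
    exact ⟨sumOrJoin.inl.comp f, hf⟩
  | right b t _ ih =>
    obtain ⟨f, hf⟩ := ih
    exact ⟨sumOrJoin.inr.comp f, hf⟩
  | node b _ _ iht ihu =>
    obtain ⟨f, hf⟩ := iht
    obtain ⟨g, hg⟩ := ihu
    exact ⟨sumOrJoin.elim (sumOrJoin.inl.comp f) (sumOrJoin.inr.comp g)
      (fun _ _ => Sum.inl_ne_inr) (fun _ _ => sumOrJoin_adj_inl_inr _ _),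
      Sum.forall.2 ⟨hf, hg⟩⟩

end Cotree

/-! ### Cotrees of cographs -/

section Cograph

variable {V W : Type*} {H : SimpleGraph V}

theorem IsCograph.of_embedding_s6 {G : SimpleGraph V} {H : SimpleGraph W} (hH : IsCograph H)
    (f : G ↪g H) : IsCograph G :=
  ⟨fun e => hH.false (f.comp e)⟩

theorem IsCograph.adj_or_adj_or_adj_of_path (hH : IsCograph H) {a b c d : V} (hab : H.Adj a b)
    (hbc : H.Adj b c) (hcd : H.Adj c d) : H.Adj a c ∨ H.Adj a d ∨ H.Adj b d := by
  by_contra! ⟨hac, had, hbd⟩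
  have nac : a ≠ c := by rintro rfl; exact had hcd
  have nad : a ≠ d := by rintro rfl; exact hbd hab.symm
  have nbd : b ≠ d := by rintro rfl; exact had hab
  refine hH.false ⟨⟨![a, b, c, d], fun i j => ?_⟩, fun {i j} => ?_⟩
  · fin_cases i <;> fin_cases j <;>
      simp [hab.ne, hab.ne', hbc.ne, hbc.ne', hcd.ne, hcd.ne', nac, nac.symm, nad, nad.symm,
        nbd, nbd.symm]
  · change H.Adj (![a, b, c, d] i) (![a, b, c, d] j) ↔ _
    fin_cases i <;> fin_cases j <;>
      simp [pathGraph_adj, hab, hab.symm, hbc, hbc.symm, hcd, hcd.symm, hac, had, hbd,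
        H.adj_comm c a, H.adj_comm d a, H.adj_comm d b]

theorem IsCograph.compl_s6 (hH : IsCograph H) : IsCograph Hᶜ := by
  -- The path `1 - 3 - 0 - 2` is the complement of the path `0 - 1 - 2 - 3`.
  let f : pathGraph 4 ↪g (pathGraph 4)ᶜ :=
    ⟨⟨![1, 3, 0, 2], by decide⟩, fun {i j} => by
      fin_cases i <;> fin_cases j <;> simp [pathGraph_adj]⟩
  refine ⟨fun e => hH.false ?_⟩
  have := Embedding.complEquiv e
  rw [compl_compl] at this
  exact this.comp f

/-- `s` is the disjoint union of two nonempty sets with no edges between them, that is, the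
subgraph of `H` induced on `s` is nonempty and disconnected. -/
def IsDisconnectedOn (H : SimpleGraph V) (s : Set V) : Prop :=
  ∃ A B : Set V, A.Nonempty ∧ B.Nonempty ∧ Disjoint A B ∧ A ∪ B = s ∧
    ∀ x ∈ A, ∀ y ∈ B, ¬ H.Adj x y

theorem IsCograph.isDisconnectedOn_insert_of_not_adj (hH : IsCograph H) {v w : V} {A B : Set V}
    (hB : B.Nonempty) (hd : Disjoint A B) (hAB : ∀ x ∈ A, ∀ y ∈ B, ¬ H.Adj x y)
    (hv : v ∉ A ∪ B) (hw : w ∈ A) (hvw : ¬ H.Adj v w) :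
    IsDisconnectedOn H (insert v (A ∪ B)) := by
  rw [Set.mem_union, not_or] at hv
  by_cases hz : ∃ z ∈ B, H.Adj v z
  · obtain ⟨z, hzB, hvz⟩ := hz
    -- An edge `x - y` in `A` with `y` but not `x` adjacent to `v` gives the path `x - y - v - z`.
    refine ⟨{x ∈ A | ¬ H.Adj v x}, insert v ({x ∈ A | H.Adj v x} ∪ B), ⟨w, hw, hvw⟩,
      Set.insert_nonempty _ _, ?_, ?_, ?_⟩
    · rw [Set.disjoint_left] at hd ⊢
      grind
    · ext x
      grind
    · rintro x ⟨hxA, hvx⟩ y (rfl | ⟨hyA, hvy⟩ | hyB) hxy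
      · exact hvx hxy.symm
      · rcases hH.adj_or_adj_or_adj_of_path hxy hvy.symm hvz with h | h | h
        exacts [hvx h.symm, hAB x hxA z hzB h, hAB y hyA z hzB h]
      · exact hAB x hxA y hyB hxy
  · push Not at hz
    refine ⟨insert v A, B, Set.insert_nonempty _ _, hB, Set.disjoint_insert_left.2 ⟨hv.2, hd⟩,
      Set.insert_union, ?_⟩
    rintro x (rfl | hx) y hy
    exacts [hz y hy, hAB x hx y hy]

theorem IsCograph.isDisconnectedOn_insert (hH : IsCograph H) {v : V} {s : Set V} (hv : v ∉ s)
    (hs : IsDisconnectedOn H s) :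
    IsDisconnectedOn H (insert v s) ∨ IsDisconnectedOn Hᶜ (insert v s) := by
  obtain ⟨A, B, hA, hB, hd, rfl, hAB⟩ := hs
  by_cases hall : ∀ w ∈ A ∪ B, H.Adj v w
  · refine .inr ⟨{v}, A ∪ B, Set.singleton_nonempty v, hA.mono Set.subset_union_left,
      Set.disjoint_singleton_left.2 hv, rfl, ?_⟩
    rintro x rfl y hy
    exact fun h => h.2 (hall y hy)
  · push Not at hall
    obtain ⟨w, hwA | hwB, hvw⟩ := hall
    · exact .inl (hH.isDisconnectedOn_insert_of_not_adj hB hd hAB hv hwA hvw)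
    · rw [Set.union_comm] at hv ⊢
      exact .inl (hH.isDisconnectedOn_insert_of_not_adj hA hd.symm
        (fun x hx y hy h => hAB y hy x hx h.symm) hv hwB hvw)

theorem IsCograph.isDisconnectedOn_or_compl (hH : IsCograph H) {s : Set V} (hfin : s.Finite)
    (hs : s.Nontrivial) : IsDisconnectedOn H s ∨ IsDisconnectedOn Hᶜ s := by
  induction s, hfin using Set.Finite.induction_on with
  | empty => exact absurd hs Set.not_nontrivial_empty
  | @insert v s hv _ ih =>
    by_cases hs' : s.Nontrivial
    · rcases ih hs' with h | h
      · exact hH.isDisconnectedOn_insert hv h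
      · simpa only [compl_compl] using (hH.compl_s6.isDisconnectedOn_insert hv h).symm
    · obtain rfl | ⟨w, rfl⟩ := (Set.not_nontrivial_iff.1 hs').eq_empty_or_singleton
      · simp at hs
      · have hvw : v ≠ w := hv
        have hpair (K : SimpleGraph V) (h : ¬ K.Adj v w) : IsDisconnectedOn K {v, w} :=
          ⟨{v}, {w}, by simp, by simp, by simpa using hvw, rfl, by simpa using h⟩
        by_cases h : H.Adj v w
        · exact .inr (hpair _ fun h' => h'.2 h)
        · exact .inl (hpair _ h)

theorem IsCograph.exists_union_adj_iff (hH : IsCograph H) {s : Set V} (hfin : s.Finite)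
    (hs : s.Nontrivial) : ∃ (b : Bool) (A B : Set V), A.Nonempty ∧ B.Nonempty ∧ Disjoint A B ∧
      A ∪ B = s ∧ ∀ x ∈ A, ∀ y ∈ B, H.Adj x y ↔ b = true := by
  rcases hH.isDisconnectedOn_or_compl hfin hs with
    ⟨A, B, hA, hB, hd, hAB, hadj⟩ | ⟨A, B, hA, hB, hd, hAB, hadj⟩
  · exact ⟨false, A, B, hA, hB, hd, hAB, by simpa using hadj⟩
  · refine ⟨true, A, B, hA, hB, hd, hAB, fun x hx y hy => iff_of_true ?_ rfl⟩
    exact by_contra fun h => hadj x hx y hy ⟨hd.ne_of_mem hx hy, h⟩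

theorem IsCograph.exists_cotree {L : Type*} (hH : IsCograph H) (l : V → L) {s : Set V}
    (hfin : s.Finite) (hs : s.Nonempty) :
    ∃ (t : Cotree L) (e : t.graph ↪g H), Set.range e = s ∧ ∀ x, t.label x = l (e x) := by
  induction hn : s.ncard using Nat.strong_induction_on generalizing s with | _ n ih
  rcases hs.exists_eq_singleton_or_nontrivial with ⟨v, rfl⟩ | hs
  · let e : (⊥ : SimpleGraph Unit) ↪g H := ⟨⟨fun _ => v, fun _ _ _ => rfl⟩, by simp⟩
    have he : Set.range e = {v} := Set.range_const
    exact ⟨.leaf (l v), e, he, fun _ => rfl⟩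
  obtain ⟨b, A, B, hA, hB, hd, rfl, hadj⟩ := hH.exists_union_adj_iff hfin hs
  have hAfin := hfin.subset Set.subset_union_left
  have hBfin := hfin.subset Set.subset_union_right
  rw [Set.ncard_union_eq hd hAfin hBfin] at hn
  have hApos := (Set.ncard_pos hAfin).2 hA
  have hBpos := (Set.ncard_pos hBfin).2 hB
  obtain ⟨t, e, rfl, ht⟩ := ih A.ncard (by omega) hAfin hA rfl
  obtain ⟨u, f, rfl, hu⟩ := ih B.ncard (by omega) hBfin hB rfl
  have hne (x y) : e x ≠ f y := hd.ne_of_mem (Set.mem_range_self x) (Set.mem_range_self y)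
  exact ⟨.node b t u,
    sumOrJoin.elim e f hne fun x y => hadj _ (Set.mem_range_self x) _ (Set.mem_range_self y),
    Set.Sum.elim_range e f, Sum.forall.2 ⟨ht, hu⟩⟩

end Cograph

/-! ### Labelled graphs -/

/-- A finite graph with vertices labelled by `L`. Its vertex set is some `Fin card`, so that these
graphs form a type, on which well-quasi-ordering can be stated. -/
structure LabelledGraph (L : Type*) where
  card : ℕ
  graph : SimpleGraph (Fin card)
  label : Fin card → L

namespace LabelledGraph

variable {L : Type*} {r : L → L → Prop}

/-- The induced subgraph relation of labelled graphs, where labels may increase along `r`. -/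
def Emb (r : L → L → Prop) (G G' : LabelledGraph L) : Prop :=
  ∃ f : G.graph ↪g G'.graph, ∀ x, r (G.label x) (G'.label (f x))

theorem partiallyWellOrderedOn_isCograph [IsPreorder L r] (hr : WellQuasiOrdered r) :
    {G : LabelledGraph L | IsCograph G.graph}.PartiallyWellOrderedOn (Emb r) := by
  rw [Set.partiallyWellOrderedOn_iff_exists_lt]
  intro G hG
  by_cases hempty : ∃ n, IsEmpty (Fin (G n).card)
  · obtain ⟨n, _⟩ := hempty
    exact ⟨n, n + 1, n.lt_succ_self, ⟨.ofIsEmpty, fun {x} => isEmptyElim x⟩, isEmptyElim⟩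
  · simp only [not_exists, not_isEmpty_iff] at hempty
    choose t e he hlabel using fun n =>
      (hG n).exists_cotree (G n).label Set.finite_univ (@Set.univ_nonempty _ (hempty n))
    obtain ⟨m, n, hmn, h⟩ := Cotree.wellQuasiOrdered_emb hr t
    obtain ⟨f, hf⟩ := h.exists_embedding
    let e' : (t m).graph ≃g (G m).graph :=
      RelIso.ofSurjective (e m) (Set.range_eq_univ.1 (he m))
    refine ⟨m, n, hmn, ((e n).comp f).comp e'.symm.toEmbedding, fun x => ?_⟩
    have := hf (e'.symm x)
    rw [hlabel, hlabel] at this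
    rwa [show e m (e'.symm x) = x from e'.apply_symm_apply x] at this

end LabelledGraph

section KProbe

variable {V W : Type*} {k : ℕ}

theorem isKProbeCograph_iff {G : SimpleGraph V} : IsKProbeCograph k G ↔
    ∃ (N : Fin k → Set V) (H : SimpleGraph V), IsCograph H ∧
      ∀ x y, G.Adj x y ↔ H.Adj x y ∧ ¬ ∃ i, x ∈ N i ∧ y ∈ N i := by
  refine exists₂_congr fun N H => ⟨?_, ?_⟩
  · rintro ⟨hN, hH, hle, hadd⟩
    refine ⟨hH, fun x y => ⟨fun h => ⟨hle x y h, fun ⟨i, hx, hy⟩ => hN i x hx y hy h⟩, ?_⟩⟩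
    rintro ⟨hxy, hnot⟩
    exact by_contra fun h => hnot (hadd x y hxy h)
  · rintro ⟨hH, h⟩
    refine ⟨?_, hH, fun x y hxy => ((h x y).1 hxy).1, ?_⟩
    · exact fun i x hx y hy hxy => ((h x y).1 hxy).2 ⟨i, hx, hy⟩
    · exact fun x y hxy hnot => by_contra fun hN => hnot ((h x y).2 ⟨hxy, hN⟩)

theorem IsKProbeCograph.of_embedding_s6 {G : SimpleGraph V} {G' : SimpleGraph W}
    (h : IsKProbeCograph k G') (f : G ↪g G') : IsKProbeCograph k G := by
  rw [isKProbeCograph_iff] at h ⊢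
  obtain ⟨N, H, hH, hG'⟩ := h
  refine ⟨fun i => f ⁻¹' N i, H.comap f, hH.of_embedding_s6 (.comap f.toEmbedding H), fun x y => ?_⟩
  rw [← f.map_adj_iff]
  exact hG' _ _

theorem isKProbeCograph_induce_iff {G : SimpleGraph V} {s : Set V} :
    IsKProbeCograph k (G.induce s) ↔
      ∃ (N : Fin k → Set V) (H : SimpleGraph V), IsCograph (H.induce s) ∧
        ∀ x ∈ s, ∀ y ∈ s, (G.Adj x y ↔ H.Adj x y ∧ ¬ ∃ i, x ∈ N i ∧ y ∈ N i) := by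
  rw [isKProbeCograph_iff]
  refine ⟨fun ⟨N, H, hH, hG⟩ => ?_, fun ⟨N, H, hH, hG⟩ =>
    ⟨fun i => Subtype.val ⁻¹' N i, H.induce s, hH, fun x y => hG x x.2 y y.2⟩⟩
  have hmap (x y : s) : (H.map Subtype.val).Adj x y ↔ H.Adj x y := map_adj_apply (f := .subtype _)
  refine ⟨fun i => Subtype.val '' N i, H.map Subtype.val,
    hH.of_embedding_s6 ⟨.refl _, (hmap _ _).symm⟩, fun x hx y hy => ?_⟩
  rw [hmap ⟨x, hx⟩ ⟨y, hy⟩]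
  simpa [hx, hy] using hG ⟨x, hx⟩ ⟨y, hy⟩

theorem isKProbeCograph_of_forall_finset {G : SimpleGraph V}
    (h : ∀ s : Finset V, IsKProbeCograph k (G.induce (s : Set V))) : IsKProbeCograph k G := by
  choose N H hH hG using fun s => isKProbeCograph_induce_iff.1 (h s)
  let U : Ultrafilter (Finset V) := .of Filter.atTop
  have hmem (x : V) : ∀ᶠ s : Finset V in U, x ∈ s :=
    Ultrafilter.of_le _ <|
      (Filter.eventually_ge_atTop {x}).mono fun _ => Finset.singleton_subset_iff.1
  let K : SimpleGraph V :=
    { Adj := fun x y => ∀ᶠ s in U, (H s).Adj x y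
      symm := ⟨fun _ _ h => h.mono fun _ => .symm⟩
      loopless := ⟨fun _ h => h.exists.elim fun _ => SimpleGraph.irrefl _⟩ }
  refine isKProbeCograph_iff.2 ⟨fun i => {x | ∀ᶠ s in U, x ∈ N s i}, K, ⟨fun e => ?_⟩,
    fun x y => ?_⟩
  · have he : ∀ᶠ s in U, ∀ a b, (H s).Adj (e a) (e b) ↔ (pathGraph 4).Adj a b := by
      refine Filter.eventually_all.2 fun a => Filter.eventually_all.2 fun b => ?_
      by_cases h : (pathGraph 4).Adj a b
      · have hK : K.Adj (e a) (e b) := e.map_adj_iff.2 h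
        exact hK.mono fun _ hs => iff_of_true hs h
      · have hK : ¬ K.Adj (e a) (e b) := mt e.map_adj_iff.1 h
        exact (Ultrafilter.eventually_not.2 hK).mono fun _ hs => iff_of_false hs h
    obtain ⟨s, hs, hes⟩ := ((Filter.eventually_all.2 fun a => hmem (e a)).and he).exists
    have hinj : Function.Injective fun a => (⟨e a, hs a⟩ : (s : Set V)) :=
      fun a b hab => e.injective (congrArg Subtype.val hab)
    exact (hH s).false ⟨⟨_, hinj⟩, fun {a b} => hes a b⟩
  · calc G.Adj x y ↔ ∀ᶠ _ : Finset V in U, G.Adj x y := Filter.eventually_const.symm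
      _ ↔ ∀ᶠ s in U, (H s).Adj x y ∧ ¬ ∃ i, x ∈ N s i ∧ y ∈ N s i :=
        Filter.eventually_congr <| (hmem x).mp <| (hmem y).mono fun s hy hx => hG s x hx y hy
      _ ↔ K.Adj x y ∧ ¬ ∃ i, (∀ᶠ s in U, x ∈ N s i) ∧ ∀ᶠ s in U, y ∈ N s i := by
        simp only [K, Filter.eventually_and, Ultrafilter.eventually_not,
          Ultrafilter.eventually_exists_iff]

theorem isKProbeCograph_iff_forall_fin {G : SimpleGraph V} : IsKProbeCograph k G ↔
    ∀ (n : ℕ) (G' : SimpleGraph (Fin n)), Nonempty (G' ↪g G) → IsKProbeCograph k G' := by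
  refine ⟨fun h n G' ⟨f⟩ => h.of_embedding_s6 f, fun h => isKProbeCograph_of_forall_finset fun s => ?_⟩
  let e := (G.induce (s : Set V)).overFinIso rfl
  exact (h _ _ ⟨(Embedding.induce _).comp e.symm.toEmbedding⟩).of_embedding_s6 e.toEmbedding

end KProbe

theorem LabelledGraph.partiallyWellOrderedOn_isKProbeCograph {L : Type*} {r : L → L → Prop}
    [IsPreorder L r] (hr : WellQuasiOrdered r) (k : ℕ) :
    {G : LabelledGraph L | IsKProbeCograph k G.graph}.PartiallyWellOrderedOn (Emb r) := by
  rw [Set.partiallyWellOrderedOn_iff_exists_lt]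
  intro G hG
  choose N H hH hadj using fun n => isKProbeCograph_iff.1 (hG n)
  let r' : Set (Fin k) × L → Set (Fin k) × L → Prop := fun a b => a.1 = b.1 ∧ r a.2 b.2
  have : IsPreorder _ r' :=
    { refl := fun a => ⟨rfl, refl_of r a.2⟩
      trans := fun a b c hab hbc => ⟨hab.1.trans hbc.1, trans_of r hab.2 hbc.2⟩ }
  have hr' : WellQuasiOrdered r' := (Finite.wellQuasiOrdered Eq).prod hr
  obtain ⟨m, n, hmn, f, hf⟩ := (partiallyWellOrderedOn_isCograph hr').exists_lt
    (f := fun n => ⟨(G n).card, H n, fun x => ({i | x ∈ N n i}, (G n).label x)⟩) hH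
  have hN (x) (i) : x ∈ N m i ↔ f x ∈ N n i := Set.ext_iff.1 (hf x).1 i
  refine ⟨m, n, hmn, ⟨f.toEmbedding, fun {x y} => ?_⟩, fun x => (hf x).2⟩
  rw [hadj m, hadj n]
  simp only [hN]
  exact and_congr_left' f.map_adj_iff

/-! ### Minimal obstructions -/

section Obstruction

variable (P : ∀ n : ℕ, SimpleGraph (Fin n) → Prop)

/-- `G` is a minimal forbidden induced subgraph of the class `P`: it does not belong to `P`, but its
induced subgraphs on fewer vertices do. Classes of graphs are restricted to the vertex sets `Fin n`
here, so that the minimal obstructions of a given size are finitely many. -/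
def IsMinimalObstruction {n : ℕ} (G : SimpleGraph (Fin n)) : Prop :=
  ¬ P n G ∧ ∀ m < n, ∀ G' : SimpleGraph (Fin m), Nonempty (G' ↪g G) → P m G'

variable {P}

theorem exists_isMinimalObstruction {n : ℕ} {G : SimpleGraph (Fin n)} (hG : ¬ P n G) :
    ∃ (m : ℕ) (G' : SimpleGraph (Fin m)), IsMinimalObstruction P G' ∧ Nonempty (G' ↪g G) := by
  induction n using Nat.strong_induction_on with
  | h n ih =>
    by_cases hmin : IsMinimalObstruction P G
    · exact ⟨n, G, hmin, ⟨.refl⟩⟩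
    · simp only [IsMinimalObstruction, hG, not_false_eq_true, true_and] at hmin
      push Not at hmin
      obtain ⟨m, hm, G', ⟨f⟩, hG'⟩ := hmin
      obtain ⟨p, G'', h, ⟨g⟩⟩ := ih m hm hG'
      exact ⟨p, G'', h, ⟨f.comp g⟩⟩

/-- The graph `G` with the vertex `0` deleted and its neighbours labelled, so that no information
about `G` is lost. -/
def LabelledGraph.deleteZero {n : ℕ} (G : SimpleGraph (Fin (n + 1))) : LabelledGraph Prop where
  card := n
  graph := G.comap Fin.succ
  label x := G.Adj 0 x.succ

theorem LabelledGraph.Emb.nonempty_embedding_of_deleteZero {m n : ℕ}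
    {G : SimpleGraph (Fin (m + 1))} {G' : SimpleGraph (Fin (n + 1))}
    (h : Emb Eq (deleteZero G) (deleteZero G')) : Nonempty (G ↪g G') := by
  obtain ⟨f, hf⟩ := h
  have hzero (x : Fin m) : G'.Adj 0 (f x).succ ↔ G.Adj 0 x.succ := (hf x).symm.to_iff
  refine ⟨⟨⟨Fin.cases 0 fun x => (f x).succ, fun x y => ?_⟩, fun {x y} => ?_⟩⟩
  · induction x using Fin.cases <;> induction y using Fin.cases
    · exact fun _ => rfl
    · exact fun e => absurd e.symm (Fin.succ_ne_zero _)
    · exact fun e => absurd e (Fin.succ_ne_zero _)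
    · exact fun e => congrArg Fin.succ (f.injective (Fin.succ_injective _ e))
  · induction x using Fin.cases <;> induction y using Fin.cases
    · simp
    · exact hzero _
    · exact (G'.adj_comm _ _).trans ((hzero _).trans (G.adj_comm _ _))
    · exact f.map_adj_iff

theorem finite_setOf_card_isMinimalObstruction
    (hP : {G : LabelledGraph Prop | P G.card G.graph}.PartiallyWellOrderedOn
      (LabelledGraph.Emb Eq)) :
    {n | ∃ G : SimpleGraph (Fin n), IsMinimalObstruction P G}.Finite := by
  suffices {n | ∃ G : SimpleGraph (Fin (n + 1)), IsMinimalObstruction P G}.Finite by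
    refine ((this.image (· + 1)).insert 0).subset ?_
    rintro (_ | n) hn
    exacts [.inl rfl, .inr ⟨n, hn, rfl⟩]
  by_contra hinf
  obtain ⟨φ, hφ, hobs⟩ := Nat.exists_strictMono_subsequence fun N =>
    (Set.Infinite.exists_gt hinf N).imp fun _ => And.symm
  choose G hG using hobs
  have hdelete (i : ℕ) : P (φ i) ((G i).comap Fin.succ) :=
    (hG i).2 _ (Nat.lt_succ_self _) _ ⟨.comap (Fin.succEmb _) (G i)⟩
  obtain ⟨i, j, hij, h⟩ := hP.exists_lt (f := fun i => .deleteZero (G i)) hdelete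
  exact (hG i).1 ((hG j).2 _ (Nat.succ_lt_succ (hφ hij)) _ h.nonempty_embedding_of_deleteZero)

theorem exists_finite_forbidden_of_partiallyWellOrderedOn
    (hmono : ∀ {m n} {G : SimpleGraph (Fin m)} {G' : SimpleGraph (Fin n)}, G ↪g G' → P n G' → P m G)
    (hP : {G : LabelledGraph Prop | P G.card G.graph}.PartiallyWellOrderedOn
      (LabelledGraph.Emb Eq)) :
    ∃ (m : ℕ) (F : Fin m → Σ n : ℕ, SimpleGraph (Fin n)), ∀ (n : ℕ) (G : SimpleGraph (Fin n)),
      P n G ↔ ∀ j, IsEmpty ((F j).2 ↪g G) := by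
  let O := {F : Σ n : ℕ, SimpleGraph (Fin n) | IsMinimalObstruction P F.2}
  have hO : O.Finite :=
    ((finite_setOf_card_isMinimalObstruction hP).biUnion fun n _ =>
      Set.finite_range (Sigma.mk n)).subset fun F hF => Set.mem_biUnion ⟨F.2, hF⟩ ⟨F.2, rfl⟩
  obtain ⟨m, F, -, hF⟩ := hO.fin_param
  have hmem (j : Fin m) : F j ∈ O := hF ▸ Set.mem_range_self j
  refine ⟨m, F, fun n G => ⟨fun hG j => ⟨fun f => (hmem j).1 (hmono f hG)⟩, fun h => ?_⟩⟩
  by_contra hG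
  obtain ⟨p, G', hG', ⟨f⟩⟩ := exists_isMinimalObstruction hG
  obtain ⟨j, hj⟩ : ⟨p, G'⟩ ∈ Set.range F := hF ▸ hG'
  have := h j
  rw [hj] at this
  exact this.false f

end Obstruction

theorem isKProbeCograph_iff_forbidden_induced_subgraphs_general.{u} (k : ℕ) :
    ∃ (m : ℕ) (F : Fin m → Σ n : ℕ, SimpleGraph (Fin n)),
      ∀ (V : Type u) (G : SimpleGraph V),
        IsKProbeCograph k G ↔ ∀ j : Fin m, IsEmpty ((F j).2 ↪g G) := by
  obtain ⟨m, F, hF⟩ := exists_finite_forbidden_of_partiallyWellOrderedOn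
    (P := fun n G => IsKProbeCograph k G) (fun f h => h.of_embedding_s6 f)
    (LabelledGraph.partiallyWellOrderedOn_isKProbeCograph (Finite.wellQuasiOrdered Eq) k)
  refine ⟨m, F, fun V G => isKProbeCograph_iff_forall_fin.trans
    ⟨fun h j => ⟨fun f => ?_⟩, fun h n G' ⟨f⟩ => ?_⟩⟩
  · exact ((hF _ _).1 (h _ _ ⟨f⟩) j).false .refl
  · exact (hF n G').2 fun j => ⟨fun g => (h j).false (f.comp g)⟩

/-- For every `k` there is a finite collection `F` of finite graphs such that a finite
graph `G` is a `k`-probe cograph if and only if no member of `F` embeds into `G`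
as an induced subgraph. -/
theorem isKProbeCograph_iff_forbidden_induced_subgraphs (k : ℕ) :
    ∃ (m : ℕ) (F : Fin m → Σ n : ℕ, SimpleGraph (Fin n)),
      ∀ (V : Type) [Fintype V] (G : SimpleGraph V),
        IsKProbeCograph k G ↔ ∀ j : Fin m, IsEmpty ((F j).2 ↪g G) := by
  obtain ⟨m, F, hF⟩ := isKProbeCograph_iff_forbidden_induced_subgraphs_general k
  exact ⟨m, F, fun V _ G => hF V G⟩
end

section
/- A finite simple graph with at least two vertices is a cograph if and only if it has a twin, i.e., two distinct vertices x and y such that every vertex z distinct from x and y is adjacent to x exactly when it is adjacent to y, and moreover the graph obtained by deleting y is a cograph. -/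
/-!
Twins in a finite cograph `G` come from a nonadjacent pair `x`, `y` whose common neighbourhood `S`
is maximal under inclusion (if `G` is complete, any two vertices are twins). Should some `w` be
adjacent to `x` but not to `y`, then `x` and `w` are twins: otherwise the absence of induced paths
on four vertices produces a nonadjacent pair whose common neighbourhood contains `S` together with
`x` or `w`. By symmetry we may also assume that no vertex is adjacent to `y` but not to `x`, and
then `x` and `y` themselves are twins.

Conversely, let `x`, `y` be twins, so that exchanging them is an automorphism of `G`. A copy of a
twin-free graph, such as the path on four vertices, cannot use both `x` and `y`; if it uses `y`,
the automorphism moves it off `y`.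
-/

open SimpleGraph

section

variable {V W : Type*} {G : SimpleGraph V} {H : SimpleGraph W}

/-- Twins: distinct vertices with the same neighbours among the other vertices. The twins
themselves may or may not be adjacent. -/
def AreTwins (G : SimpleGraph V) (x y : V) : Prop :=
  x ≠ y ∧ ∀ z, z ≠ x → z ≠ y → (G.Adj z x ↔ G.Adj z y)

namespace AreTwins

theorem of_map {i j : W} (f : H ↪g G) (h : AreTwins G (f i) (f j)) : AreTwins H i j := by
  refine ⟨fun hij ↦ h.1 (congrArg f hij), fun k hki hkj ↦ ?_⟩
  simpa only [f.map_adj_iff] using h.2 (f k) (f.injective.ne hki) (f.injective.ne hkj)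

/-- The automorphism of a graph that exchanges two twins; it moves an induced subgraph from one
twin to the other. -/
def swapIso [DecidableEq V] {x y : V} (h : AreTwins G x y) : G ≃g G where
  toEquiv := Equiv.swap x y
  map_rel_iff' {a b} := by
    have ha := h.2 a
    have hb := h.2 b
    simp only [Equiv.swap_apply_def]
    grind [G.adj_comm, G.irrefl]

end AreTwins

theorem isEmpty_embedding_of_areTwins {x y : V} (hH : ∀ i j, ¬ AreTwins H i j)
    (hxy : AreTwins G x y) (h : IsEmpty (H ↪g G.induce {z | z ≠ y})) : IsEmpty (H ↪g G) := by
  classical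
  have meets_y : ∀ f : H ↪g G, ∃ i, f i = y := by
    intro f
    by_contra! hf
    exact h.false (RelEmbedding.codRestrict {z | z ≠ y} f hf)
  refine ⟨fun f ↦ ?_⟩
  obtain ⟨j, hj⟩ := meets_y f
  obtain ⟨i, hi⟩ := meets_y (hxy.swapIso.toEmbedding.comp f)
  have hi : f i = x := by
    simpa using (Equiv.swap_apply_eq_iff (x := x) (y := y)).1 hi
  exact hH i j (.of_map f (hi ▸ hj ▸ hxy))

theorem not_areTwins_pathGraph_four (i j : Fin 4) : ¬ AreTwins (pathGraph 4) i j := by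
  simp only [AreTwins, pathGraph_adj]
  revert i j
  decide

namespace IsCograph

theorem of_areTwins {x y : V} (hxy : AreTwins G x y) (h : IsCograph (G.induce {z | z ≠ y})) :
    IsCograph G :=
  isEmpty_embedding_of_areTwins not_areTwins_pathGraph_four hxy h

theorem adj_or_adj_or_adj (hG : IsCograph G) {a b c d : V} (hab : G.Adj a b) (hbc : G.Adj b c)
    (hcd : G.Adj c d) : G.Adj a c ∨ G.Adj b d ∨ G.Adj a d := by
  by_contra! ⟨hac, hbd, had⟩
  have hadj : ∀ i j, G.Adj (![a, b, c, d] i) (![a, b, c, d] j) ↔ (pathGraph 4).Adj i j := by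
    simp [Fin.forall_fin_succ, pathGraph_adj, hab, hbc, hcd, hac, hbd, had, G.adj_comm]
  have hne : a ≠ d := fun h ↦ hac (h ▸ hcd.symm)
  have hinj : Function.Injective ![a, b, c, d] := by
    intro i j hij
    fin_cases i <;> fin_cases j <;> simp_all
  exact hG.false ⟨⟨_, hinj⟩, hadj _ _⟩

theorem commonNeighbors_subset_neighborSet (hG : IsCograph G) {x y w : V} (hxy : ¬ G.Adj x y)
    (hxw : G.Adj x w) (hwy : ¬ G.Adj w y) : G.commonNeighbors x y ⊆ G.neighborSet w := by
  rintro s ⟨hxs, hys⟩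
  obtain hws | hxy' | hwy' := hG.adj_or_adj_or_adj hxw.symm hxs hys.symm
  exacts [hws, absurd hxy' hxy, absurd hwy' hwy]

end IsCograph

/-- Two distinct nonadjacent vertices whose common neighbourhood is maximal under inclusion among
all such pairs; the extremal choice from which twins are found. -/
def IsMaximalNonadjPair (G : SimpleGraph V) (x y : V) : Prop :=
  MaximalFor (fun e : V × V ↦ Gᶜ.Adj e.1 e.2) (fun e ↦ G.commonNeighbors e.1 e.2) (x, y)

namespace IsMaximalNonadjPair

variable {x y : V}

theorem symm (h : IsMaximalNonadjPair G x y) : IsMaximalNonadjPair G y x :=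
  ⟨h.1.symm, fun e he ↦ by simpa only [commonNeighbors_symm G y x] using h.2 he⟩

theorem not_adj (h : IsMaximalNonadjPair G x y) : ¬ G.Adj x y :=
  ((compl_adj G x y).1 h.1).2

theorem adj_of_commonNeighbors_subset (h : IsMaximalNonadjPair G x y) {a b c : V} (hab : a ≠ b)
    (hsub : G.commonNeighbors x y ⊆ G.commonNeighbors a b) (hc : c ∈ G.commonNeighbors a b)
    (hcxy : c ∉ G.commonNeighbors x y) : G.Adj a b := by
  by_contra hnadj
  exact hcxy (h.2 (j := (a, b)) ((compl_adj G a b).2 ⟨hab, hnadj⟩) hsub hc)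

theorem areTwins_of_adj (h : IsMaximalNonadjPair G x y) (hG : IsCograph G) {w : V}
    (hxw : G.Adj x w) (hwy : ¬ G.Adj w y) : AreTwins G x w := by
  have subset_w := hG.commonNeighbors_subset_neighborSet h.not_adj hxw hwy
  refine ⟨hxw.ne, fun z hzx hzw ↦ ⟨fun hz ↦ ?_, fun hz ↦ ?_⟩⟩
  · by_cases hzy : G.Adj z y
    · exact (subset_w ⟨hz.symm, hzy.symm⟩).symm
    have subset_z := hG.commonNeighbors_subset_neighborSet h.not_adj hz.symm hzy
    exact h.adj_of_commonNeighbors_subset hzw (Set.subset_inter subset_z subset_w)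
      (c := x) ⟨hz, hxw.symm⟩ fun hx ↦ G.irrefl hx.1
  · by_contra hzx_nadj
    have hzy : ¬ G.Adj z y := fun hzy ↦ by
      obtain hxz | hwy' | hxy := hG.adj_or_adj_or_adj hxw hz.symm hzy
      exacts [hzx_nadj hxz.symm, hwy hwy', h.not_adj hxy]
    have subset_z : G.commonNeighbors x y ⊆ G.neighborSet z := fun s hs ↦
      hG.commonNeighbors_subset_neighborSet hwy hz.symm hzy ⟨subset_w hs, hs.2⟩
    exact hzx_nadj <| h.adj_of_commonNeighbors_subset hzx
      (Set.subset_inter subset_z Set.inter_subset_left)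
      (c := w) ⟨hz, hxw⟩ fun hw ↦ hwy hw.2.symm

theorem exists_areTwins (h : IsMaximalNonadjPair G x y) (hG : IsCograph G) :
    ∃ a b, AreTwins G a b := by
  by_cases hx : ∃ w, G.Adj x w ∧ ¬ G.Adj w y
  · obtain ⟨w, hxw, hwy⟩ := hx
    exact ⟨x, w, h.areTwins_of_adj hG hxw hwy⟩
  by_cases hy : ∃ w, G.Adj y w ∧ ¬ G.Adj w x
  · obtain ⟨w, hyw, hwx⟩ := hy
    exact ⟨y, w, h.symm.areTwins_of_adj hG hyw hwx⟩
  push Not at hx hy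
  exact ⟨x, y, h.1.ne, fun z _ _ ↦ ⟨fun hz ↦ hx z hz.symm, fun hz ↦ hy z hz.symm⟩⟩

end IsMaximalNonadjPair

theorem exists_isMaximalNonadjPair [Finite V] (hG : G ≠ ⊤) : ∃ x y, IsMaximalNonadjPair G x y := by
  obtain ⟨a, b, hab, hnadj⟩ := ne_top_iff_exists_not_adj.1 hG
  obtain ⟨⟨x, y⟩, hxy⟩ := (Set.toFinite {e : V × V | Gᶜ.Adj e.1 e.2}).exists_maximalFor
    (fun e ↦ G.commonNeighbors e.1 e.2) _ ⟨(a, b), (compl_adj G a b).2 ⟨hab, hnadj⟩⟩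
  exact ⟨x, y, hxy⟩

theorem areTwins_top {x y : V} (hxy : x ≠ y) : AreTwins (⊤ : SimpleGraph V) x y :=
  ⟨hxy, fun _ hzx hzy ↦ iff_of_true hzx hzy⟩

theorem IsCograph.exists_areTwins [Finite V] [Nontrivial V] (hG : IsCograph G) :
    ∃ x y, AreTwins G x y := by
  obtain rfl | hne := eq_or_ne G ⊤
  · obtain ⟨x, y, hxy⟩ := exists_pair_ne V
    exact ⟨x, y, areTwins_top hxy⟩
  · obtain ⟨x, y, hxy⟩ := exists_isMaximalNonadjPair hne
    exact hxy.exists_areTwins hG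

end

/-- A finite simple graph with at least two vertices is a cograph if and only if it has a
pair of twins `x ≠ y` and deleting `y` leaves a cograph. -/
theorem cograph_iff_twin_and_delete
    {V : Type*} [Fintype V] [Nontrivial V] (G : SimpleGraph V) :
    IsCograph G ↔
      ∃ x y : V, x ≠ y ∧
        (∀ z : V, z ≠ x → z ≠ y → (G.Adj z x ↔ G.Adj z y)) ∧
        IsCograph (G.induce {z : V | z ≠ y}) := by
  constructor
  · intro hG
    obtain ⟨x, y, hne, htwins⟩ := hG.exists_areTwins
    exact ⟨x, y, hne, htwins, hG.of_embedding (Embedding.induce _)⟩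
  · rintro ⟨x, y, hne, htwins, hdel⟩
    exact .of_areTwins ⟨hne, htwins⟩ hdel
end
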